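/- arXiv:2411.14897 — 2 statements merged into one kernel-verified Lean document; each statement's English description precedes it below -/
import Mathlib

section
/- If S is a right ample semigroup whose set of idempotents E(S) is a semilattice, then the set H of all regular elements of S is an inverse subsemigroup of S (i.e., H is closed under multiplication, every element of H is regular in H, and idempotents of H commute, so each element of H has a unique inverse). -/
/-!
Everything follows from idempotents commuting. If `a = a * x * a` and `b = b * y * b`, then
`x * a` and `b * y` are idempotents; swapping them shows that `y * x` is an inner inverse of
`a * b` (`mul_innerInverse`). An inner inverse `x` of `a` yields the genuine inverse `x * a * x`.
Two inverses `b`, `c` of `a` are both equal to `b * a * c` (`inverse_unique`), by commuting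
`a * b` with `a * c` on one side and `b * a` with `c * a` on the other.
-/

namespace NetworkSemigroup

/-- A network: vertices `V`, relations `T`, with source and range maps assigning to each
relation disjoint nonempty subsets of `V`. -/
structure Network (V T : Type) where
  s : T → Set V
  r : T → Set V
  s_nonempty : ∀ t, (s t).Nonempty
  r_nonempty : ∀ t, (r t).Nonempty
  disj : ∀ t, s t ∩ r t = ∅

variable {V T : Type}

/-- Membership in `T⁰`: sources and ranges of relations, together with singletons of vertices. -/
def Network.InT0 (N : Network V T) (A : Set V) : Prop :=
  (∃ t, A = N.s t) ∨ (∃ t, A = N.r t) ∨ (∃ v : V, A = {v})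

/-- The set `T⁰` as a type. -/
def Network.T0 (N : Network V T) : Type := { A : Set V // N.InT0 A }

/-- The generating set `X = T ∪ T⁰ ∪ T⁻¹ ∪ {0}` of the presentation of `Q_Γ`. -/
inductive Gen (N : Network V T) : Type
  | pos : T → Gen N
  | neg : T → Gen N
  | ver : N.T0 → Gen N
  | zero : Gen N

namespace Gen

variable {N : Network V T}

/-- The source (as a set of vertices) of a generator. -/
def srcSet : Gen N → Set V
  | .pos t => N.s t
  | .neg t => N.r t
  | .ver A => A.1
  | .zero => ∅

/-- The range (as a set of vertices) of a generator. -/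
def rngSet : Gen N → Set V
  | .pos t => N.r t
  | .neg t => N.s t
  | .ver A => A.1
  | .zero => ∅

/-- The source of a generator, as the corresponding element of `T⁰`. -/
def srcGen : Gen N → Gen N
  | .pos t => .ver ⟨N.s t, Or.inl ⟨t, rfl⟩⟩
  | .neg t => .ver ⟨N.r t, Or.inr (Or.inl ⟨t, rfl⟩)⟩
  | .ver A => .ver A
  | .zero => .zero

/-- The range of a generator, as the corresponding element of `T⁰`. -/
def rngGen : Gen N → Gen N
  | .pos t => .ver ⟨N.r t, Or.inr (Or.inl ⟨t, rfl⟩)⟩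
  | .neg t => .ver ⟨N.s t, Or.inl ⟨t, rfl⟩⟩
  | .ver A => .ver A
  | .zero => .zero

end Gen

open FreeSemigroup

/-- The defining relations (NR1)–(NR6) of the presentation of `Q_Γ`, as a binary relation on
the free semigroup over the generators. -/
inductive NRel (N : Network V T) : FreeSemigroup (Gen N) → FreeSemigroup (Gen N) → Prop
  | nr1l (g : Gen N) (hg : g ≠ .zero) : NRel N (of g.srcGen * of g) (of g)
  | nr1r (g : Gen N) (hg : g ≠ .zero) : NRel N (of g * of g.rngGen) (of g)
  | nr2 (g₁ g₂ : Gen N) (h₁ : g₁ ≠ .zero) (h₂ : g₂ ≠ .zero)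
      (h : g₁.rngSet ∩ g₂.srcSet = ∅) : NRel N (of g₁ * of g₂) (of .zero)
  | nr3 (t₁ t₂ : T) (h : t₁ ≠ t₂) :
      NRel N (of (.neg t₁) * of (.pos t₂)) (of .zero)
  | nr4 (t : T) :
      NRel N (of (.neg t) * of (.pos t)) (of (.ver ⟨N.r t, Or.inr (Or.inl ⟨t, rfl⟩)⟩))
  | nr5 (t : T) (A : N.T0) (h : A.1 ≠ N.s t) :
      NRel N (of (.neg t) * of (.ver A)) (of .zero)
  | nr6l (x : Gen N) : NRel N (of .zero * of x) (of .zero)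
  | nr6r (x : Gen N) : NRel N (of x * of .zero) (of .zero)

/-- The congruence on the free semigroup generated by the defining relations. -/
def QCon (N : Network V T) : Con (FreeSemigroup (Gen N)) := conGen (NRel N)

/-- The semigroup `Q_Γ` given by the presentation `⟨X : R⟩`. -/
abbrev QGamma (N : Network V T) : Type := (QCon N).Quotient

/-- The congruence class of a word. -/
def Qofw {N : Network V T} (w : FreeSemigroup (Gen N)) : QGamma N := (w : (QCon N).Quotient)

/-- The zero element `[0]` of `Q_Γ`. -/
def Qzero (N : Network V T) : QGamma N := Qofw (of .zero)

/-- Path symbols: elements of `T ∪ T⁰`. -/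
def PSym (N : Network V T) : Type := T ⊕ N.T0

namespace PSym

variable {N : Network V T}

/-- The source of a path symbol. -/
def src : PSym N → Set V
  | Sum.inl t => N.s t
  | Sum.inr A => A.1

/-- The range of a path symbol. -/
def rng : PSym N → Set V
  | Sum.inl t => N.r t
  | Sum.inr A => A.1

/-- The generator corresponding to a path symbol. -/
def toGen : PSym N → Gen N
  | Sum.inl t => Gen.pos t
  | Sum.inr A => Gen.ver A

/-- The generator corresponding to the inverse of a path symbol (`t ↦ t⁻¹`, `A ↦ A`). -/
def toInvGen : PSym N → Gen N
  | Sum.inl t => Gen.neg t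
  | Sum.inr A => Gen.ver A

/-- The path symbol is the element of `T⁰` given by the set `B`. -/
def IsVerOf : PSym N → Set V → Prop
  | Sum.inl _, _ => False
  | Sum.inr A, B => A.1 = B

end PSym

/-- `L` is a path: a nonempty sequence of elements of `T ∪ T⁰` in which the range of each
symbol meets the source of the next one. -/
def IsPath (N : Network V T) (L : List (PSym N)) : Prop :=
  L ≠ [] ∧ ∀ (i : ℕ) (a b : PSym N), L[i]? = some a → L[i + 1]? = some b →
    (a.rng ∩ b.src).Nonempty

/-- `L` is linear: the range of each symbol equals the source of the next one. -/
def IsLinear (N : Network V T) (L : List (PSym N)) : Prop :=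
  ∀ (i : ℕ) (a b : PSym N), L[i]? = some a → L[i + 1]? = some b → a.rng = b.src

/-- `L = t₁⋯tₙ` is reduced: `t_{n-1} ≠ s(tₙ)` and, for `1 < i < n`,
`t_{i-1} ≠ s(tᵢ)` and `t_{i+1} ≠ r(tᵢ)`. -/
def IsReducedPath (N : Network V T) (L : List (PSym N)) : Prop :=
  (∀ (i : ℕ) (a b : PSym N), L[i]? = some a → L[i + 1]? = some b →
      i + 2 = L.length → ¬ a.IsVerOf b.src) ∧
  (∀ (i : ℕ) (a b c : PSym N), L[i]? = some a → L[i + 1]? = some b → L[i + 2]? = some c →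
      ¬ a.IsVerOf b.src ∧ ¬ c.IsVerOf b.rng)

/-- `RP(Γ)`: reduced paths. -/
def RP (N : Network V T) : Set (List (PSym N)) :=
  { L | IsPath N L ∧ IsReducedPath N L }

/-- `RLP(Γ)`: reduced linear paths. -/
def RLP (N : Network V T) : Set (List (PSym N)) :=
  { L | IsPath N L ∧ IsLinear N L ∧ IsReducedPath N L }

/-- The source `s(α)` of a path. -/
def pathSrc (N : Network V T) (L : List (PSym N)) : Set V :=
  match L.head? with
  | some a => a.src
  | none => ∅

/-- The range `r(α)` of a path. -/
def pathRng (N : Network V T) (L : List (PSym N)) : Set V :=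
  match L.getLast? with
  | some a => a.rng
  | none => ∅

/-- The path is a single symbol from `T⁰` (an "empty path"). -/
def InT0Path (N : Network V T) (L : List (PSym N)) : Prop :=
  ∃ A : N.T0, L = [Sum.inr A]

/-- The word of the free semigroup determined by a nonempty list of generators
(by convention the empty list is sent to the word `0`). -/
def genWord {N : Network V T} : List (Gen N) → FreeSemigroup (Gen N)
  | [] => of .zero
  | a :: M => ⟨a, M⟩

/-- The word `α` of a path `α`. -/
def word {N : Network V T} (L : List (PSym N)) : FreeSemigroup (Gen N) :=
  genWord (L.map PSym.toGen)

/-- The word `α⁻¹ = tₙ⁻¹⋯t₁⁻¹` of a path `α = t₁⋯tₙ`. -/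
def invWord {N : Network V T} (L : List (PSym N)) : FreeSemigroup (Gen N) :=
  genWord (L.reverse.map PSym.toInvGen)

/-- `αβ⁻¹` is in right normal form: `α ∈ RP(Γ)`, `β ∈ RLP(Γ)` and `r(α) = r(β)`. -/
def IsRNF (N : Network V T) (α β : List (PSym N)) : Prop :=
  α ∈ RP N ∧ β ∈ RLP N ∧ pathRng N α = pathRng N β

/-- The element `[αβ⁻¹]` of `Q_Γ`. -/
def Qrnf (N : Network V T) (α β : List (PSym N)) : QGamma N :=
  Qofw (word α * invWord β)

/-- The relation `L*`: `a L* b` iff for all `x, y ∈ S¹`, `ax = ay ⇔ bx = by`. -/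
def LStar {S : Type*} [Semigroup S] (a b : S) : Prop :=
  ∀ x y : WithOne S,
    (a : WithOne S) * x = (a : WithOne S) * y ↔ (b : WithOne S) * x = (b : WithOne S) * y

/-- The relation `R*`: `a R* b` iff for all `x, y ∈ S¹`, `xa = ya ⇔ xb = yb`. -/
def RStar {S : Type*} [Semigroup S] (a b : S) : Prop :=
  ∀ x y : WithOne S,
    x * (a : WithOne S) = y * (a : WithOne S) ↔ x * (b : WithOne S) = y * (b : WithOne S)

/-- Green's relation `R`: `a R b` iff `aS¹ = bS¹`. -/
def GreenR {S : Type*} [Semigroup S] (a b : S) : Prop :=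
  (∃ x : WithOne S, (a : WithOne S) * x = b) ∧ ∃ y : WithOne S, (b : WithOne S) * y = a

/-- Green's relation `L`: `a L b` iff `S¹a = S¹b`. -/
def GreenL {S : Type*} [Semigroup S] (a b : S) : Prop :=
  (∃ x : WithOne S, x * (a : WithOne S) = b) ∧ ∃ y : WithOne S, y * (b : WithOne S) = a

/-- Green's relation `H = L ∩ R`. -/
def GreenH {S : Type*} [Semigroup S] (a b : S) : Prop :=
  GreenL a b ∧ GreenR a b


/-- The set `H` of regular elements of a semigroup. -/
def regularSet (S : Type*) [Semigroup S] : Set S := { a | ∃ b, a * b * a = a }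

theorem isIdempotentElem_mul_left {S : Type*} [Semigroup S] {a x : S} (h : a * x * a = a) :
    IsIdempotentElem (x * a) := by
  rw [IsIdempotentElem, mul_assoc, ← mul_assoc a, h]

theorem isIdempotentElem_mul_right {S : Type*} [Semigroup S] {a x : S} (h : a * x * a = a) :
    IsIdempotentElem (a * x) := by
  rw [IsIdempotentElem, ← mul_assoc, h]

theorem mul_innerInverse {S : Type*} [Semigroup S]
    (hcomm : ∀ e f : S, IsIdempotentElem e → IsIdempotentElem f → e * f = f * e)
    {a b x y : S} (ha : a * x * a = a) (hb : b * y * b = b) :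
    (a * b) * (y * x) * (a * b) = a * b :=
  calc (a * b) * (y * x) * (a * b) = a * ((b * y) * (x * a)) * b := by simp only [mul_assoc]
    _ = a * ((x * a) * (b * y)) * b := by
      rw [hcomm _ _ (isIdempotentElem_mul_right hb) (isIdempotentElem_mul_left ha)]
    _ = (a * x * a) * (b * y * b) := by simp only [mul_assoc]
    _ = a * b := by rw [ha, hb]

theorem inverse_unique {S : Type*} [Semigroup S]
    (hcomm : ∀ e f : S, IsIdempotentElem e → IsIdempotentElem f → e * f = f * e)
    {a b c : S} (hb : a * b * a = a) (hb' : b * a * b = b)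
    (hc : a * c * a = a) (hc' : c * a * c = c) : b = c :=
  calc b = b * (a * c * a) * b := by rw [hc, hb']
    _ = b * ((a * c) * (a * b)) := by simp only [mul_assoc]
    _ = b * ((a * b) * (a * c)) := by
      rw [hcomm _ _ (isIdempotentElem_mul_right hc) (isIdempotentElem_mul_right hb)]
    _ = (b * a * b) * a * c := by simp only [mul_assoc]
    _ = (b * (a * c * a)) * c := by rw [hb', hc]
    _ = ((b * a) * (c * a)) * c := by simp only [mul_assoc]
    _ = ((c * a) * (b * a)) * c := by
      rw [hcomm _ _ (isIdempotentElem_mul_left hb) (isIdempotentElem_mul_left hc)]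
    _ = c * (a * b * a) * c := by simp only [mul_assoc]
    _ = c := by rw [hb, hc']

/-- Every regular element has an inverse: an inner inverse `x` of `a` gives `x * a * x`. -/
theorem exists_inverse {S : Type*} [Semigroup S] {a : S} (ha : a ∈ regularSet S) :
    ∃ b, a * b * a = a ∧ b * a * b = b := by
  obtain ⟨x, hx⟩ := ha
  refine ⟨x * a * x, ?_, ?_⟩
  · calc a * (x * a * x) * a = (a * x * a) * x * a := by simp only [mul_assoc]
      _ = a := by rw [hx, hx]
  · calc x * a * x * a * (x * a * x) = x * ((a * x * a) * x * a) * x := by simp only [mul_assoc]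
      _ = x * a * x := by rw [hx, hx]

/-- If `S` is a right ample semigroup whose set of idempotents is a semilattice
(idempotents commute, hence `E(S)` is closed under products), then the set `H` of all regular
elements of `S` is an inverse subsemigroup of `S`: `H` is closed under multiplication, every
element of `H` has an inverse lying in `H`, idempotents of `H` commute, and each element of `H`
has a unique inverse. -/
theorem regular_elements_form_inverse_subsemigroup {S : Type*} [Semigroup S]
    (habundant : ∀ a : S, ∃ e : S, IsIdempotentElem e ∧ LStar a e)
    (hcomm : ∀ e f : S, IsIdempotentElem e → IsIdempotentElem f → e * f = f * e)
    (hample : ∀ a e : S, IsIdempotentElem e → ∀ g : S, IsIdempotentElem g →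
      LStar (e * a) g → e * a = a * g) :
    (∀ a ∈ regularSet S, ∀ b ∈ regularSet S, a * b ∈ regularSet S) ∧
    (∀ a ∈ regularSet S, ∃ b ∈ regularSet S, a * b * a = a ∧ b * a * b = b) ∧
    (∀ e f : S, e ∈ regularSet S → f ∈ regularSet S →
      IsIdempotentElem e → IsIdempotentElem f → e * f = f * e) ∧
    (∀ a ∈ regularSet S, ∃! b : S, a * b * a = a ∧ b * a * b = b) := by
  refine ⟨?_, ?_, fun e f _ _ he hf => hcomm e f he hf, ?_⟩
  · rintro a ⟨x, hx⟩ b ⟨y, hy⟩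
    exact ⟨y * x, mul_innerInverse hcomm hx hy⟩
  · intro a ha
    obtain ⟨b, hb, hb'⟩ := exists_inverse ha
    exact ⟨b, ⟨a, hb'⟩, hb, hb'⟩
  · intro a ha
    obtain ⟨b, hb, hb'⟩ := exists_inverse ha
    exact ⟨b, ⟨hb, hb'⟩, fun c hc => inverse_unique hcomm hc.1 hc.2 hb hb'⟩

end NetworkSemigroup
end

section
/- The set of idempotents of Q_Γ is E(Q_Γ) = {[αα⁻¹] : α ∈ RLP(Γ)} ∪ {[0]}, and the subset E = E(Q_Γ) ∖ {[A] : A ∈ T⁰} = {[αα⁻¹] : α ∈ RLP(Γ)∖T⁰} ∪ {[0]} is a subsemilattice of Q_Γ (a commutative subsemigroup consisting of idempotents). -/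
/-! Let `pq t`, `nq t`, `vq A` be the classes of `t`, `t⁻¹`, `A`. A nonzero element of `Q_Γ` is the
reading of a *state*: a set `A ∈ T⁰` (the current source) followed by a list of edges, where an
edge is `t`, `t⁻¹`, or a jump between two distinct intersecting members of `T⁰`, and where no
edge other than some `u⁻¹` follows a `t⁻¹`. So a state is a path in the free category generated
by relations and jumps, followed by the inverse of a linear path.

`Q_Γ` acts on states (with an added zero `none`) by left multiplication (`Act`); checking this
only involves single generators. Reading is equivariant (`mul_readO`), which gives the normal
form `q = read A w` with `(A, w) = q · (C, [])` for a suitable `C`. If `q` is idempotent then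
`q` fixes `(A, w)`. Writing `w` as a path `f` followed by inverses `ν`, the path `f` can only be
pushed (`act_path`), so the action of `ν` must turn `f ++ ν` into `ν`; since each `t⁻¹` cancels
a leading `t`, or, once no path is left, is prepended, this forces `ν` to be the inverse of `f`
(`act_inverse`), and no jump occurs in `f`.

Hence idempotents are the elements `El A ts = t₁⋯tₙ tₙ⁻¹⋯t₁⁻¹` with `ts` linear, and zero.
The recursion `El A (t :: ts) = pq t * El (r t) ts * nq t` and `nq t * pq u = 0` for `t ≠ u`
show that the product of two such elements with nonempty paths is the one with the longer path if
one path is a prefix of the other, and zero otherwise (`El_mul`, `El_cons_mul_ne`). -/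

namespace NetworkSemigroup

variable {V T : Type}

open FreeSemigroup

/-- The set `E = E(Q_Γ) ∖ {[A] : A ∈ T⁰} = {[αα⁻¹] : α ∈ RLP(Γ)∖T⁰} ∪ {[0]}`. -/
def Eset (N : Network V T) : Set (QGamma N) :=
  { q | ∃ α ∈ RLP N, ¬ InT0Path N α ∧ q = Qrnf N α α } ∪ {Qzero N}

/-! ### Generators of the quotient and their relations -/

section Aux

variable {N : Network V T}

/-- The source of `t` as an element of `T⁰`. -/
def sT (N : Network V T) (t : T) : N.T0 := ⟨N.s t, Or.inl ⟨t, rfl⟩⟩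

/-- The range of `t` as an element of `T⁰`. -/
def rT (N : Network V T) (t : T) : N.T0 := ⟨N.r t, Or.inr (Or.inl ⟨t, rfl⟩)⟩

/-- The class of a generator. -/
def gq (g : Gen N) : QGamma N := Qofw (of g)

/-- The class `[t]`. -/
def pq (N : Network V T) (t : T) : QGamma N := gq (.pos t)

/-- The class `[t⁻¹]`. -/
def nq (N : Network V T) (t : T) : QGamma N := gq (.neg t)

/-- The class `[A]`. -/
def vq (A : N.T0) : QGamma N := gq (.ver A)

lemma Qofw_mul (a b : FreeSemigroup (Gen N)) : Qofw (a * b) = Qofw a * Qofw b := rfl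

lemma Qofw_rel {a b : FreeSemigroup (Gen N)} (h : NRel N a b) : Qofw a = Qofw b :=
  (Con.eq _).2 (ConGen.Rel.of _ _ h)

lemma T0_nonempty (A : N.T0) : A.1.Nonempty := by
  obtain ⟨A, ⟨t, rfl⟩ | ⟨t, rfl⟩ | ⟨v, rfl⟩⟩ := A
  · exact N.s_nonempty t
  · exact N.r_nonempty t
  · exact Set.singleton_nonempty v

lemma vq_idem (A : N.T0) : vq A * vq A = vq A :=
  Qofw_rel (.nr1l (.ver A) (by simp))

lemma vq_disj {A B : N.T0} (h : A.1 ∩ B.1 = ∅) : vq A * vq B = Qzero N :=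
  Qofw_rel (.nr2 (.ver A) (.ver B) (by simp) (by simp) h)

lemma sT_pq (t : T) : vq (sT N t) * pq N t = pq N t :=
  Qofw_rel (.nr1l (.pos t) (by simp))

lemma pq_rT (t : T) : pq N t * vq (rT N t) = pq N t :=
  Qofw_rel (.nr1r (.pos t) (by simp))

lemma rT_nq (t : T) : vq (rT N t) * nq N t = nq N t :=
  Qofw_rel (.nr1l (.neg t) (by simp))

lemma nq_sT (t : T) : nq N t * vq (sT N t) = nq N t :=
  Qofw_rel (.nr1r (.neg t) (by simp))

lemma nq_pq_ne {t u : T} (h : t ≠ u) : nq N t * pq N u = Qzero N :=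
  Qofw_rel (.nr3 t u h)

lemma nq_pq (t : T) : nq N t * pq N t = vq (rT N t) :=
  Qofw_rel (.nr4 t)

lemma nq_vq {t : T} {A : N.T0} (h : A ≠ sT N t) : nq N t * vq A = Qzero N :=
  Qofw_rel (.nr5 t A (fun e => h (Subtype.ext e)))

lemma zero_mul_q (q : QGamma N) : Qzero N * q = Qzero N := by
  induction q using Con.induction_on with
  | H w =>
    induction w using FreeSemigroup.recOnMul with
    | ih1 x => exact Qofw_rel (.nr6l x)
    | ih2 x y hx hy =>
      change Qzero N * (Qofw (of x) * Qofw y) = _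
      rw [← mul_assoc]
      exact (congrArg (· * Qofw y) hx).trans hy

lemma mul_zero_q (q : QGamma N) : q * Qzero N = Qzero N := by
  induction q using Con.induction_on with
  | H w =>
    induction w using FreeSemigroup.recOnMul with
    | ih1 x => exact Qofw_rel (.nr6r x)
    | ih2 x y hx hy =>
      change (Qofw (of x) * Qofw y) * Qzero N = _
      rw [mul_assoc]
      exact (congrArg (Qofw (of x) * ·) hy).trans hx

/-- Every nonzero element has a right identity in `T⁰`: the range of the last generator. -/
lemma exists_right_ver (q : QGamma N) : q = Qzero N ∨ ∃ C : N.T0, q * vq C = q := by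
  induction q using Con.induction_on with
  | H w =>
    induction w using FreeSemigroup.recOnMul with
    | ih1 x =>
      rcases x with t | t | A | _
      · exact Or.inr ⟨rT N t, pq_rT t⟩
      · exact Or.inr ⟨sT N t, nq_sT t⟩
      · exact Or.inr ⟨A, vq_idem A⟩
      · exact Or.inl rfl
    | ih2 x y _ hy =>
      rcases hy with hy | ⟨C, hC⟩
      · left
        change Qofw (of x) * Qofw y = _
        exact (congrArg (Qofw (of x) * ·) hy).trans (mul_zero_q _)
      · right
        refine ⟨C, ?_⟩
        change (Qofw (of x) * Qofw y) * _ = Qofw (of x) * Qofw y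
        rw [mul_assoc]
        exact congrArg (Qofw (of x) * ·) hC

/-! ### The action on states -/

/-- Edges of a state: a relation, an inverse relation, or a jump to the set `D ∈ T⁰` (from the
source of the edge, which is recorded by what precedes it). -/
inductive Edge (N : Network V T) : Type
  | pos : T → Edge N
  | neg : T → Edge N
  | jump : N.T0 → Edge N

/-- A state: a source in `T⁰` and a list of edges, not necessarily composable; see `Valid`. -/
abbrev St (N : Network V T) : Type := N.T0 × List (Edge N)

/-- Composability of the edges from the source `A`: jumps are between distinct sets, and only
inverses follow an inverse. That the two sets of a jump intersect is not demanded: if they do not,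
the state reads as zero. -/
def Valid : N.T0 → List (Edge N) → Prop
  | _, [] => True
  | A, .pos t :: w => A = sT N t ∧ Valid (rT N t) w
  | A, .neg t :: w => A = rT N t ∧ Valid (sT N t) w ∧ ∃ ns : List T, w = ns.map .neg
  | A, .jump D :: w => A ≠ D ∧ Valid D w

open Classical in
/-- Left multiplication of a state by `A ∈ T⁰`. -/
noncomputable def actV (A : N.T0) (x : St N) : Option (St N) :=
  if A = x.1 then some x else if A.1 ∩ x.1.1 = ∅ then none else some (A, .jump x.1 :: x.2)

/-- Left multiplication of a state by `t`. -/
noncomputable def actP (t : T) (x : St N) : Option (St N) :=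
  (actV (rT N t) x).map fun y => (sT N t, .pos t :: y.2)

open Classical in
/-- Left multiplication of a state by `t⁻¹`: cancel a leading `t`, or prepend `t⁻¹` to a list of
inverses. -/
noncomputable def actN (t : T) (x : St N) : Option (St N) :=
  if x.1 = sT N t then
    match x.2 with
    | [] => some (rT N t, [.neg t])
    | .neg u :: w => some (rT N t, .neg t :: .neg u :: w)
    | .pos u :: w => if u = t then some (rT N t, w) else none
    | .jump _ :: _ => none
  else none

/-- Left multiplication by a generator, with `none` as zero. -/
noncomputable def act : Gen N → Option (St N) → Option (St N)
  | .pos t, x => x.bind (actP t)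
  | .neg t, x => x.bind (actN t)
  | .ver A, x => x.bind (actV A)
  | .zero, _ => none

lemma actV_fst {A : N.T0} {x y : St N} (h : actV A x = some y) : y.1 = A := by
  unfold actV at h
  split_ifs at h with h1 h2
  · simp_all
  · simp at h; simp [← h]

lemma actV_self {A : N.T0} {x : St N} (h : x.1 = A) : actV A x = some x := by
  simp [actV, h]

lemma actV_disj {A : N.T0} {x : St N} (h : A.1 ∩ x.1.1 = ∅) : actV A x = none := by
  unfold actV
  rw [if_neg, if_pos h]
  rintro rfl
  rw [Set.inter_self] at h
  exact (T0_nonempty x.1).ne_empty h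

lemma actP_fst {t : T} {x y : St N} (h : actP t x = some y) : y.1 = sT N t := by
  obtain ⟨z, -, rfl⟩ := Option.map_eq_some_iff.1 h
  rfl

lemma actN_fst {t : T} {x y : St N} (h : actN t x = some y) :
    x.1 = sT N t ∧ y.1 = rT N t := by
  obtain ⟨A, w⟩ := x
  rcases w with _ | ⟨_ | _ | _, w⟩ <;> simp only [actN] at h <;> split_ifs at h <;>
    simp_all <;> simp [← h]

lemma act_fst {g : Gen N} {x : Option (St N)} {y : St N} (h : act g x = some y) :
    y.1.1 = g.srcSet := by
  rcases g with t | t | A | _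
  · obtain ⟨z, -, h⟩ := Option.bind_eq_some_iff.1 h
    rw [actP_fst h]; rfl
  · obtain ⟨z, -, h⟩ := Option.bind_eq_some_iff.1 h
    rw [(actN_fst h).2]; rfl
  · obtain ⟨z, -, h⟩ := Option.bind_eq_some_iff.1 h
    rw [actV_fst h]; rfl
  · cases h

lemma act_none (g : Gen N) : act g none = none := by
  cases g <;> rfl

lemma act_disj {g : Gen N} {x : St N} (h : g.rngSet ∩ x.1.1 = ∅) : act g (some x) = none := by
  rcases g with t | t | A | _
  · change (actV (rT N t) x).map _ = none
    rw [actV_disj h]; rfl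
  · change actN t x = none
    rw [actN, if_neg]
    intro e
    rw [e] at h
    change N.s t ∩ N.s t = ∅ at h
    rw [Set.inter_self] at h
    exact (N.s_nonempty t).ne_empty h
  · exact actV_disj h
  · rfl

/-- The source of a generator acts trivially on states with that source. -/
lemma act_srcGen {g : Gen N} (hg : g ≠ .zero) {y : St N} (h : y.1.1 = g.srcSet) :
    act g.srcGen (some y) = some y := by
  rcases g with t | t | A | _
  · exact actV_self (Subtype.ext h)
  · exact actV_self (Subtype.ext h)
  · exact actV_self (Subtype.ext h)
  · exact absurd rfl hg

lemma act_rngGen (g : Gen N) (x : St N) :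
    act g (act g.rngGen (some x)) = act g (some x) := by
  rcases g with t | t | A | _
  · change (actV (rT N t) x).bind (actP t) = (actV (rT N t) x).map _
    rcases h : actV (rT N t) x with _ | y
    · rfl
    · simp [actP, actV_self (actV_fst h)]
  · change (actV (sT N t) x).bind (actN t) = actN t x
    by_cases h : x.1 = sT N t
    · rw [actV_self h]; rfl
    · have h2 : actN t x = none := by rw [actN, if_neg h]
      rw [h2, actV, if_neg (Ne.symm h)]
      split_ifs
      · rfl
      · simp [actN]
  · change (actV A x).bind (actV A) = actV A x
    rcases h : actV A x with _ | y
    · rfl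
    · simp [actV_self (actV_fst h)]
  · rfl

/-- The action of words. -/
noncomputable def actHom (N : Network V T) :
    FreeSemigroup (Gen N) →ₙ* Function.End (Option (St N)) :=
  FreeSemigroup.lift (fun g => (act g : Function.End (Option (St N))))

lemma actHom_of (g : Gen N) (x : Option (St N)) : actHom N (of g) x = act g x :=
  congrFun (FreeSemigroup.lift_of (β := Function.End (Option (St N))) act g) x

lemma actHom_mul (a b : FreeSemigroup (Gen N)) (x : Option (St N)) :
    actHom N (a * b) x = actHom N a (actHom N b x) := by
  rw [map_mul]; rfl

lemma actHom_rel {a b : FreeSemigroup (Gen N)} (h : NRel N a b) (x : Option (St N)) :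
    actHom N a x = actHom N b x := by
  cases h with
  | nr1l g hg =>
    rw [actHom_mul]
    simp only [actHom_of]
    rcases h : act g x with _ | y
    · exact act_none _
    · exact act_srcGen hg (act_fst h)
  | nr1r g hg =>
    rw [actHom_mul]
    simp only [actHom_of]
    rcases x with _ | x
    · simp only [act_none]
    · exact act_rngGen g x
  | nr2 g₁ g₂ h₁ h₂ h =>
    rw [actHom_mul]
    simp only [actHom_of]
    change _ = none
    rcases h' : act g₂ x with _ | y
    · exact act_none _
    · exact act_disj (by rw [act_fst h']; exact h)
  | nr3 t u h =>
    rw [actHom_mul]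
    simp only [actHom_of]
    change _ = none
    rcases h' : act (.pos u) x with _ | y
    · exact act_none _
    · obtain ⟨z, -, h'⟩ := Option.bind_eq_some_iff.1 h'
      obtain ⟨z', -, rfl⟩ := Option.map_eq_some_iff.1 h'
      simp [act, actN, Ne.symm h]
  | nr4 t =>
    rw [actHom_mul]
    simp only [actHom_of]
    rcases x with _ | x
    · rfl
    change (actP t x).bind (actN t) = actV (rT N t) x
    rw [actP]
    rcases h : actV (rT N t) x with _ | y
    · rfl
    · have := actV_fst h
      simp [actN, ← this]
  | nr5 t A h =>
    rw [actHom_mul]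
    simp only [actHom_of]
    change _ = none
    rcases h' : act (.ver A) x with _ | y
    · exact act_none _
    · change actN t y = none
      rw [actN, if_neg]
      intro e
      have := act_fst h'
      rw [e] at this
      exact h this.symm
  | nr6l g => rw [actHom_mul]; simp only [actHom_of]; rfl
  | nr6r g =>
    rw [actHom_mul]; simp only [actHom_of]
    exact act_none g

/-- The action of `Q_Γ` on states. -/
noncomputable def Act (q : QGamma N) : Option (St N) → Option (St N) :=
  Con.liftOn q (fun w => actHom N w) (fun a b h => by
    have : QCon N ≤ Con.ker (actHom N) :=
      Con.conGen_le.2 fun x y hxy => funext fun z => actHom_rel hxy z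
    exact this h)

lemma Act_mul (a b : QGamma N) (x : Option (St N)) : Act (a * b) x = Act a (Act b x) := by
  induction a, b using Con.induction_on₂ with
  | H a b => exact actHom_mul a b x

lemma Act_pq (t : T) (x : Option (St N)) : Act (pq N t) x = x.bind (actP t) :=
  actHom_of (.pos t) x

lemma Act_nq (t : T) (x : Option (St N)) : Act (nq N t) x = x.bind (actN t) :=
  actHom_of (.neg t) x

lemma Act_vq (A : N.T0) (x : Option (St N)) : Act (vq A) x = x.bind (actV A) :=
  actHom_of (.ver A) x

lemma Act_zero (x : Option (St N)) : Act (Qzero N) x = none :=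
  actHom_of .zero x

lemma vq_ne_zero (A : N.T0) : vq A ≠ Qzero N := by
  intro h
  have := congrArg (fun q => Act q (some (A, []))) h
  simp [Act_vq, Act_zero, actV] at this

/-! ### Reading states: normal forms -/

/-- The element of `Q_Γ` spelled by a state. -/
def read : N.T0 → List (Edge N) → QGamma N
  | A, [] => vq A
  | _, .pos t :: w => pq N t * read (rT N t) w
  | _, .neg t :: w => nq N t * read (sT N t) w
  | A, .jump D :: w => vq A * read D w

/-- Reading, with `none` read as zero. -/
def readO : Option (St N) → QGamma N
  | none => Qzero N
  | some x => read x.1 x.2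

/-- Validity, holding vacuously for `none`. -/
def ValidO : Option (St N) → Prop
  | none => True
  | some x => Valid x.1 x.2

lemma vq_read {A : N.T0} {w : List (Edge N)} (h : Valid A w) : vq A * read A w = read A w := by
  rcases w with _ | ⟨t | t | D, w⟩
  · exact vq_idem A
  · simp only [Valid] at h
    simp only [read]
    rw [h.1, ← mul_assoc, sT_pq]
  · simp only [Valid] at h
    simp only [read]
    rw [h.1, ← mul_assoc, rT_nq]
  · simp only [read]
    rw [← mul_assoc, vq_idem]

lemma vq_mul_read (A : N.T0) {x : St N} (h : Valid x.1 x.2) :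
    vq A * read x.1 x.2 = readO (actV A x) ∧ ValidO (actV A x) := by
  unfold actV
  split_ifs with h1 h2
  · subst h1
    exact ⟨vq_read h, h⟩
  · refine ⟨?_, trivial⟩
    rw [← vq_read h, ← mul_assoc, vq_disj h2]
    exact zero_mul_q _
  · exact ⟨rfl, h1, h⟩

lemma pq_mul_read (t : T) {x : St N} (h : Valid x.1 x.2) :
    pq N t * read x.1 x.2 = readO (actP t x) ∧ ValidO (actP t x) := by
  obtain ⟨h1, h2⟩ := vq_mul_read (rT N t) h
  rw [← pq_rT, mul_assoc, h1, actP]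
  rcases h3 : actV (rT N t) x with _ | y
  · exact ⟨mul_zero_q _, trivial⟩
  · rw [h3] at h2
    have h4 := actV_fst h3
    obtain ⟨B, w⟩ := y
    simp only at h4
    subst h4
    exact ⟨rfl, rfl, h2⟩

lemma nq_mul_read (t : T) {x : St N} (h : Valid x.1 x.2) :
    nq N t * read x.1 x.2 = readO (actN t x) ∧ ValidO (actN t x) := by
  obtain ⟨B, w⟩ := x
  by_cases hB : B = sT N t
  · subst hB
    rcases w with _ | ⟨u | u | D, w⟩
    · simp [actN, readO, ValidO, read, Valid]
    · by_cases hu : u = t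
      · subst hu
        simp only [actN, if_true, readO, ValidO]
        simp only [Valid] at h
        refine ⟨?_, h.2⟩
        simp only [read]
        rw [← mul_assoc, nq_pq, vq_read h.2]
      · simp only [actN, if_true, if_neg hu, readO, ValidO, and_true]
        simp only [read]
        rw [← mul_assoc, nq_pq_ne (Ne.symm hu), zero_mul_q]
    · simp only [actN, if_true, readO, ValidO]
      simp only [Valid] at h
      obtain ⟨h1, h2, ns, rfl⟩ := h
      exact ⟨rfl, rfl, ⟨h1, h2, ns, rfl⟩, u :: ns, rfl⟩
    · simp only [actN, if_true, readO, ValidO, and_true]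
      simp only [Valid] at h
      simp only [read]
      -- The jump target `D` differs from `s(t)`, so `t⁻¹ D = 0`.
      rw [← mul_assoc, nq_sT, ← vq_read h.2, ← mul_assoc, nq_vq (Ne.symm h.1), zero_mul_q]
  · have : actN t (B, w) = none := by rw [actN, if_neg hB]
    rw [this]
    refine ⟨?_, trivial⟩
    rw [← vq_read h, ← mul_assoc, nq_vq hB]
    exact zero_mul_q _

/-- Reading is equivariant, and the action preserves validity. -/
lemma mul_readO (q : QGamma N) : ∀ x : Option (St N), ValidO x →
    q * readO x = readO (Act q x) ∧ ValidO (Act q x) := by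
  induction q using Con.induction_on with
  | H w =>
    induction w using FreeSemigroup.recOnMul with
    | ih1 g =>
      intro x hx
      change gq g * readO x = readO (Act (gq g) x) ∧ ValidO (Act (gq g) x)
      have hA : Act (gq g) x = act g x := actHom_of g x
      rw [hA]
      rcases x with _ | x
      · rw [act_none]
        exact ⟨mul_zero_q _, trivial⟩
      rcases g with t | t | A | _
      · exact pq_mul_read t hx
      · exact nq_mul_read t hx
      · exact vq_mul_read A hx
      · exact ⟨zero_mul_q _, trivial⟩
    | ih2 g y hg hy =>
      intro x hx
      obtain ⟨h1, h2⟩ := hy x hx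
      obtain ⟨h3, h4⟩ := hg _ h2
      change (Qofw (of g) * Qofw y) * readO x = readO (Act (Qofw (of g) * Qofw y) x) ∧
        ValidO (Act (Qofw (of g) * Qofw y) x)
      rw [Act_mul, mul_assoc]
      exact ⟨(congrArg (Qofw (of g) * ·) h1).trans h3, h4⟩

/-- Normal form: a nonzero element is read off from its value at a suitable base point. -/
lemma exists_read (q : QGamma N) (hq : q ≠ Qzero N) :
    ∃ (C A : N.T0) (w : List (Edge N)), Valid A w ∧ q = read A w ∧
      Act q (some (C, [])) = some (A, w) := by
  obtain ⟨C, hC⟩ := (exists_right_ver q).resolve_left hq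
  obtain ⟨h1, h2⟩ := mul_readO q (some (C, [])) trivial
  have h3 : q = readO (Act q (some (C, []))) := by rw [← h1]; exact hC.symm
  rcases h : Act q (some (C, [])) with _ | ⟨A, w⟩
  · rw [h] at h3
    exact absurd h3 hq
  · rw [h] at h2 h3
    exact ⟨C, A, w, h2, h3, h⟩

/-! ### Idempotents fix their state -/

/-- Edges of the path part of a state. -/
def IsFwd : Edge N → Prop
  | .neg _ => False
  | _ => True

lemma Valid.split : ∀ {A : N.T0} {w : List (Edge N)}, Valid A w →
    ∃ (f : List (Edge N)) (ns : List T), (∀ e ∈ f, IsFwd e) ∧ w = f ++ ns.map .neg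
  | _, [], _ => ⟨[], [], by simp, rfl⟩
  | _, .pos t :: _, h => by
    obtain ⟨f, ns, hf, rfl⟩ := Valid.split h.2
    exact ⟨.pos t :: f, ns, by simpa [IsFwd] using hf, rfl⟩
  | _, .neg t :: _, h => by
    obtain ⟨ns, rfl⟩ := h.2.2
    exact ⟨[], t :: ns, by simp, rfl⟩
  | _, .jump D :: _, h => by
    obtain ⟨f, ns, hf, rfl⟩ := Valid.split h.2
    exact ⟨.jump D :: f, ns, by simpa [IsFwd] using hf, rfl⟩

lemma Act_read_fst {A : N.T0} {w : List (Edge N)} (h : Valid A w) {y : Option (St N)}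
    {z : St N} (hz : Act (read A w) y = some z) : z.1 = A := by
  rw [← vq_read h, Act_mul, Act_vq] at hz
  obtain ⟨x, -, hx⟩ := Option.bind_eq_some_iff.1 hz
  exact actV_fst hx

/-- A path acts by being pushed in front of the state. -/
lemma act_path (y : Option (St N)) (w : List (Edge N)) : ∀ (f : List (Edge N)) (A : N.T0)
    (z : List (Edge N)), (∀ e ∈ f, IsFwd e) → Valid A (f ++ w) →
    Act (read A (f ++ w)) y = some (A, z) →
    ∃ B z', z = f ++ z' ∧ Valid B w ∧ Act (read B w) y = some (B, z')
  | [], A, z, _, hv, h => ⟨A, z, rfl, hv, h⟩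
  | .neg _ :: _, _, _, hf, _, _ => (hf _ List.mem_cons_self).elim
  | .pos t :: f, A, z, hf, hv, h => by
    simp only [List.cons_append, read, Act_mul, Act_pq] at h
    obtain ⟨⟨B, z₁⟩, hx, h⟩ := Option.bind_eq_some_iff.1 h
    have hB := Act_read_fst hv.2 hx
    simp only at hB
    subst hB
    obtain ⟨B, z', rfl, hB, h'⟩ :=
      act_path y w f _ z₁ (fun e he => hf e (List.mem_cons_of_mem _ he)) hv.2 hx
    simp [actP, actV] at h
    exact ⟨B, z', h.2.symm, hB, h'⟩
  | .jump D :: f, A, z, hf, hv, h => by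
    simp only [List.cons_append, read, Act_mul, Act_vq] at h
    obtain ⟨⟨B, z₁⟩, hx, h⟩ := Option.bind_eq_some_iff.1 h
    have hB := Act_read_fst hv.2 hx
    simp only at hB
    subst hB
    obtain ⟨B', z', rfl, hB, hact⟩ :=
      act_path y w f _ z₁ (fun e he => hf e (List.mem_cons_of_mem _ he)) hv.2 hx
    have hne : A ≠ B := hv.1
    simp only [actV, if_neg hne] at h
    split_ifs at h
    simp at h
    exact ⟨B', z', h.symm, hB, hact⟩

/-- The inverse of a linear path acts by cancelling an initial part of the path of the state, and
what is left of it once that path is exhausted is prepended. The last alternative is that of an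
empty path, which is an element of `T⁰`. -/
lemma act_inverse (A : N.T0) (f : List (Edge N)) (hf : ∀ e ∈ f, IsFwd e) (ms : List T) :
    ∀ (ns : List T) (B B' : N.T0) (z : List (Edge N)),
    Act (read B (ns.map .neg)) (some (A, f ++ ms.map .neg)) = some (B', z) →
    (∃ f', f = ns.reverse.map .pos ++ f' ∧ z = f' ++ ms.map .neg) ∨
    (∃ ns' k, ns = ns' ++ k ∧ f = k.reverse.map .pos ∧ z = (ns' ++ ms).map .neg) ∨
    (∃ D z', z = .jump D :: z')
  | [], B, B', z, h => by
    simp only [List.map_nil, read, Act_vq, Option.bind_some, actV] at h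
    split_ifs at h
    · simp at h
      exact Or.inl ⟨f, by simp, h.2.symm⟩
    · simp at h
      exact Or.inr (Or.inr ⟨_, _, h.2.symm⟩)
  | t :: ns, B, B', z, h => by
    simp only [List.map_cons, read, Act_mul, Act_nq] at h
    obtain ⟨⟨C, z₁⟩, hx, h⟩ := Option.bind_eq_some_iff.1 h
    have hC := (actN_fst h).1
    simp only at hC
    subst hC
    rcases act_inverse A f hf ms ns _ _ _ hx with
      ⟨f', rfl, rfl⟩ | ⟨ns', k, rfl, rfl, rfl⟩ | ⟨D, z', rfl⟩
    · rcases f' with _ | ⟨u | u | D, f'⟩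
      · refine Or.inr (Or.inl ⟨[t], ns, rfl, by simp, ?_⟩)
        rcases ms with _ | ⟨m, ms⟩ <;> simp [actN] at h <;> simp [← h.2]
      · simp only [List.cons_append, actN, if_true] at h
        split_ifs at h with hu
        subst hu
        simp at h
        exact Or.inl ⟨f', by simp, h.2.symm⟩
      · exact (hf (.neg u) (by simp)).elim
      · simp [actN] at h
    · refine Or.inr (Or.inl ⟨t :: ns', k, rfl, rfl, ?_⟩)
      rcases hl : ns' ++ ms with _ | ⟨m, l⟩ <;> rw [hl] at h <;> simp [actN] at h <;>
        simp [← h.2, hl]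
    · simp [actN] at h

/-! ### The idempotents attached to linear paths -/

/-- `ts` is a linear path of relations with source `A` (no condition if `ts` is empty). -/
def Lin (N : Network V T) : N.T0 → List T → Prop
  | _, [] => True
  | A, t :: ts => A = sT N t ∧ Lin N (rT N t) ts

/-- The element `t₁⋯tₙ tₙ⁻¹⋯t₁⁻¹`, which is `A` for the empty list. -/
def El (N : Network V T) : N.T0 → List T → QGamma N
  | A, [] => vq A
  | _, t :: ts => pq N t * El N (rT N t) ts * nq N t

lemma vq_El {A : N.T0} {ts : List T} (h : Lin N A ts) : vq A * El N A ts = El N A ts := by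
  rcases ts with _ | ⟨t, ts⟩
  · exact vq_idem A
  · rw [El, h.1, ← mul_assoc, ← mul_assoc, sT_pq]

lemma El_vq {A : N.T0} {ts : List T} (h : Lin N A ts) : El N A ts * vq A = El N A ts := by
  rcases ts with _ | ⟨t, ts⟩
  · exact vq_idem A
  · rw [El, h.1, mul_assoc, nq_sT]

lemma El_cons_mul_ne (A B : N.T0) {t u : T} (ts us : List T) (h : t ≠ u) :
    El N A (t :: ts) * El N B (u :: us) = Qzero N := by
  have : El N A (t :: ts) * El N B (u :: us) =
      pq N t * El N (rT N t) ts * ((nq N t * pq N u) * (El N (rT N u) us * nq N u)) := by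
    simp only [El, mul_assoc]
  rw [this, nq_pq_ne h, zero_mul_q, mul_zero_q]

lemma El_cons_mul (A B : N.T0) (t : T) {ts us : List T} (h : Lin N (rT N t) us) :
    El N A (t :: ts) * El N B (t :: us) =
      pq N t * (El N (rT N t) ts * El N (rT N t) us) * nq N t := by
  have : El N A (t :: ts) * El N B (t :: us) =
      pq N t * (El N (rT N t) ts * ((nq N t * pq N t) * El N (rT N t) us)) * nq N t := by
    simp only [El, mul_assoc]
  rw [this, nq_pq, vq_El h]

lemma El_idem : ∀ {A : N.T0} {ts : List T}, Lin N A ts →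
    El N A ts * El N A ts = El N A ts
  | A, [], _ => vq_idem A
  | A, t :: ts, h => by rw [El_cons_mul A A t h.2, El_idem h.2, El]

/-- Two such elements with the same source commute, and their product is one of them or zero. -/
lemma El_mul : ∀ {A : N.T0} {ts us : List T}, Lin N A ts → Lin N A us →
    El N A ts * El N A us = El N A us * El N A ts ∧
    (El N A ts * El N A us = El N A ts ∨ El N A ts * El N A us = El N A us ∨
      El N A ts * El N A us = Qzero N)
  | A, [], us, _, h => by
    have h1 := vq_El h
    have h2 := El_vq h
    simp only [El]
    rw [h1, h2]
    simp
  | A, t :: ts, [], h, _ => by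
    have h1 := vq_El h
    have h2 := El_vq h
    rw [show El N A [] = vq A from rfl, h1, h2]
    simp
  | A, t :: ts, u :: us, h, h' => by
    by_cases htu : t = u
    · subst htu
      obtain ⟨h1, h2⟩ := El_mul h.2 h'.2
      rw [El_cons_mul A A t h'.2, El_cons_mul A A t h.2, ← h1]
      refine ⟨rfl, ?_⟩
      rcases h2 with h2 | h2 | h2 <;> rw [h2]
      · exact Or.inl rfl
      · exact Or.inr (Or.inl rfl)
      · exact Or.inr (Or.inr (by rw [mul_zero_q, zero_mul_q]))
    · rw [El_cons_mul_ne A A ts us htu, El_cons_mul_ne A A us ts (Ne.symm htu)]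
      simp

lemma El_cons_ne_vq (A B : N.T0) (t : T) (ts : List T) : El N A (t :: ts) ≠ vq B := by
  intro h
  have := congrArg (fun q => Act q (some (B, []))) h
  simp only [El, mul_assoc, Act_mul, Act_vq, Option.bind_some, actV, if_true] at this
  -- The action of `El` ends with that of `t`, which leaves `t` as the first edge.
  rw [Act_pq] at this
  obtain ⟨y, -, hy⟩ := Option.bind_eq_some_iff.1 this
  obtain ⟨z, -, hz⟩ := Option.map_eq_some_iff.1 hy
  simp at hz

lemma Valid.lin : ∀ {A : N.T0} {ts : List T} {w : List (Edge N)},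
    Valid A (ts.map .pos ++ w) → Lin N A ts
  | _, [], _, _ => trivial
  | _, _ :: _, _, h => ⟨h.1, Valid.lin h.2⟩

lemma read_append_neg (t : T) : ∀ {A : N.T0} {w : List (Edge N)}, Valid A (w ++ [.neg t]) →
    read A (w ++ [.neg t]) = read A w * nq N t
  | A, [], h => by
    have h1 : A = rT N t := h.1
    simp only [List.nil_append, read]
    rw [h1, nq_sT, rT_nq]
  | A, .pos u :: w, h => by
    simp only [List.cons_append, read]
    rw [read_append_neg t h.2, mul_assoc]
  | A, .neg u :: w, h => by
    simp only [List.cons_append, read]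
    rw [read_append_neg t h.2.1, mul_assoc]
  | A, .jump D :: w, h => by
    simp only [List.cons_append, read]
    rw [read_append_neg t h.2, mul_assoc]

lemma Valid.of_append {e : Edge N} : ∀ {A : N.T0} {w : List (Edge N)}, Valid A (w ++ [e]) → Valid A w
  | _, [], _ => trivial
  | _, .pos _ :: _, h => ⟨h.1, Valid.of_append h.2⟩
  | _, .jump _ :: _, h => ⟨h.1, Valid.of_append h.2⟩
  | _, .neg _ :: w, h => by
    refine ⟨h.1, Valid.of_append h.2.1, ?_⟩
    obtain ⟨ns, hns⟩ := h.2.2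
    obtain ⟨l₁, l₂, -, h1, -⟩ := List.map_eq_append_iff.1 hns.symm
    exact ⟨l₁, h1.symm⟩

lemma read_eq_El : ∀ {A : N.T0} {ts : List T},
    Valid A (ts.map .pos ++ ts.reverse.map .neg) →
    read A (ts.map .pos ++ ts.reverse.map .neg) = El N A ts
  | _, [], _ => rfl
  | A, t :: ts, h => by
    have e : ((t :: ts).map Edge.pos ++ (t :: ts).reverse.map Edge.neg : List (Edge N)) =
        .pos t :: ((ts.map .pos ++ ts.reverse.map .neg) ++ [.neg t]) := by simp
    rw [e] at h ⊢
    have h2 := h.2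
    rw [read, read_append_neg t h2, read_eq_El h2.of_append, El, mul_assoc]

lemma exists_El_of_idem {q : QGamma N} (hq : IsIdempotentElem q) (h0 : q ≠ Qzero N) :
    ∃ A ts, Lin N A ts ∧ q = El N A ts := by
  obtain ⟨C, A, w, hv, hr, hA⟩ := exists_read q h0
  have hfix : Act q (some (A, w)) = some (A, w) := by
    rw [← hA, ← Act_mul, hq.eq]
  obtain ⟨f, ns, hf, rfl⟩ := hv.split
  have h1 := hfix
  rw [hr] at h1
  obtain ⟨B, z', hz, hB, h2⟩ := act_path _ _ f A _ hf hv h1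
  have hz' := List.append_cancel_left hz
  subst hz'
  have hfn : f = ns.reverse.map .pos := by
    rcases act_inverse A f hf ns ns B B _ h2 with ⟨f', h3, h4⟩ | ⟨ns', k, h3, h4, h5⟩ | ⟨D, z', h3⟩
    · have : f' = [] := by simpa using h4
      simpa [this] using h3
    · have : ns' = [] := by
        have := congrArg List.length h5
        simpa using this
      subst this
      rw [h4, h3]; rfl
    · rcases ns with _ | ⟨n, ns⟩ <;> simp at h3
  subst hfn
  refine ⟨A, ns.reverse, hv.lin, ?_⟩
  rw [hr]
  have h3 := @read_eq_El V T N A ns.reverse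
  rw [List.reverse_reverse] at h3
  exact h3 hv

/-! ### Reduced linear paths -/

lemma word_cons (a b : PSym N) (L : List (PSym N)) :
    Qofw (word (a :: b :: L)) = gq a.toGen * Qofw (word (b :: L)) := rfl

lemma genWord_append (x : Gen N) : ∀ {l : List (Gen N)}, l ≠ [] →
    genWord (l ++ [x]) = genWord l * of x
  | [], h => absurd rfl h
  | _ :: _, _ => rfl

lemma invWord_cons (a b : PSym N) (L : List (PSym N)) :
    Qofw (invWord (a :: b :: L)) = Qofw (invWord (b :: L)) * gq a.toInvGen := by
  have : invWord (a :: b :: L) = invWord (b :: L) * of a.toInvGen := by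
    unfold invWord
    rw [List.reverse_cons, List.map_append]
    exact genWord_append _ (by simp)
  rw [this]; rfl

lemma Qrnf_cons (t : T) (b : PSym N) (L : List (PSym N)) :
    Qrnf N (Sum.inl t :: b :: L) (Sum.inl t :: b :: L) =
      pq N t * Qrnf N (b :: L) (b :: L) * nq N t := by
  have h1 := word_cons (Sum.inl t) b L
  have h2 := invWord_cons (Sum.inl t) b L
  unfold Qrnf
  rw [Qofw_mul, Qofw_mul, h1, h2]
  simp only [mul_assoc]
  rfl

/-- The source of a path symbol as an element of `T⁰`. -/
def srcT : PSym N → N.T0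
  | Sum.inl t => sT N t
  | Sum.inr A => A

lemma srcT_val (a : PSym N) : (srcT a).1 = a.src := by cases a <;> rfl

/-- In a path that is linear and whose symbols are not the source of their successor, all
symbols but possibly the last one are relations. A last symbol equal to the range of its
predecessor does not change the element `[αα⁻¹]`. -/
lemma exists_El_of_path : ∀ (L : List (PSym N)) (a : PSym N),
    (∀ (i : ℕ) (b c : PSym N), (a :: L)[i]? = some b → (a :: L)[i + 1]? = some c →
      b.rng = c.src ∧ ¬ b.IsVerOf c.src) →
    ∃ ts, Lin N (srcT a) ts ∧ Qrnf N (a :: L) (a :: L) = El N (srcT a) ts ∧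
      (ts = [] → InT0Path N (a :: L))
  | [], Sum.inl t, _ => by
    refine ⟨[t], ⟨rfl, trivial⟩, ?_, by simp⟩
    rw [El, El, pq_rT]; rfl
  | [], Sum.inr A, _ => ⟨[], trivial, vq_idem A, fun _ => ⟨A, rfl⟩⟩
  | b :: L, Sum.inr A, h => by
    obtain ⟨h1, h2⟩ := h 0 _ _ rfl rfl
    exact absurd h1 h2
  | b :: L, Sum.inl t, h => by
    obtain ⟨ts, h1, h2, -⟩ := exists_El_of_path L b (fun i x y hx hy => h (i + 1) x y hx hy)
    have h3 : srcT b = rT N t := by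
      apply Subtype.ext
      rw [srcT_val]
      exact (h 0 _ _ rfl rfl).1.symm
    rw [h3] at h1 h2
    refine ⟨t :: ts, ⟨rfl, h1⟩, ?_, by simp⟩
    have h4 := Qrnf_cons t b L
    rw [h2] at h4
    exact h4

lemma exists_El_of_RLP {α : List (PSym N)} (h : α ∈ RLP N) :
    ∃ A ts, Lin N A ts ∧ Qrnf N α α = El N A ts ∧ (ts = [] → InT0Path N α) := by
  obtain ⟨⟨hne, -⟩, hlin, hr1, hr2⟩ := h
  rcases α with _ | ⟨a, L⟩
  · exact absurd rfl hne
  refine ⟨srcT a, exists_El_of_path L a fun i b c hb hc => ⟨hlin i b c hb hc, ?_⟩⟩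
  rcases hd : (a :: L)[i + 2]? with _ | d
  · refine hr1 i b c hb hc ?_
    have h1 := List.getElem?_eq_none_iff.1 hd
    have h2 := (List.getElem?_eq_some_iff.1 hc).1
    omega
  · exact (hr2 i b c d hb hc hd).1

lemma Lin.getElem : ∀ {A : N.T0} {ts : List T}, Lin N A ts → ∀ (i : ℕ) (t u : T),
    ts[i]? = some t → ts[i + 1]? = some u → N.r t = N.s u
  | _, [], _, _, _, _, h, _ => by simp at h
  | _, [_], _, _, _, _, _, h => by simp at h
  | _, _ :: _ :: _, hl, 0, _, _, ht, hu => by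
    simp at ht hu
    subst ht hu
    exact congrArg Subtype.val hl.2.1
  | _, _ :: _ :: _, hl, i + 1, t, u, ht, hu => Lin.getElem hl.2 i t u ht hu

lemma Qrnf_map_inl : ∀ {A : N.T0} {t : T} {ts : List T}, Lin N A (t :: ts) →
    Qrnf N ((t :: ts).map Sum.inl) ((t :: ts).map Sum.inl) = El N A (t :: ts)
  | _, t, [], _ => by
    rw [El, El, pq_rT]; rfl
  | _, t, u :: us, h => by
    have h1 := Qrnf_cons (N := N) t (Sum.inl u) (us.map Sum.inl)
    have h2 := Qrnf_map_inl h.2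
    rw [El, ← h2]
    exact h1

lemma exists_RLP_of_Lin {A : N.T0} {ts : List T} (h : Lin N A ts) :
    ∃ α ∈ RLP N, El N A ts = Qrnf N α α ∧ (ts ≠ [] → ¬ InT0Path N α) := by
  rcases ts with _ | ⟨t, ts⟩
  · refine ⟨[Sum.inr A], ⟨⟨by simp, ?_⟩, ?_, ?_, ?_⟩, (vq_idem A).symm, by simp⟩
    · intro i a b _ hb
      cases hb
    · intro i a b _ hb
      cases hb
    · intro i a b _ hb
      cases hb
    · intro i a b c _ hb
      cases hb
  have inl_of : ∀ (i : ℕ) (a : PSym N), ((t :: ts).map (Sum.inl : T → PSym N))[i]? = some a →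
      ∃ u, a = Sum.inl u ∧ (t :: ts)[i]? = some u := by
    intro i a ha
    rw [List.getElem?_map] at ha
    obtain ⟨u, hu, rfl⟩ := Option.map_eq_some_iff.1 ha
    exact ⟨u, rfl, hu⟩
  have hlin : IsLinear N ((t :: ts).map Sum.inl) := by
    intro i a b ha hb
    obtain ⟨u, rfl, hu⟩ := inl_of i a ha
    obtain ⟨u', rfl, hu'⟩ := inl_of _ b hb
    exact h.getElem i u u' hu hu'
  refine ⟨(t :: ts).map Sum.inl, ⟨⟨List.cons_ne_nil _ _, ?_⟩, hlin, ?_, ?_⟩, (Qrnf_map_inl h).symm, ?_⟩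
  · intro i a b ha hb
    rw [hlin i a b ha hb, Set.inter_self, ← srcT_val]
    exact T0_nonempty _
  · intro i a b ha _ _
    obtain ⟨u, rfl, -⟩ := inl_of i a ha
    exact id
  · intro i a b c ha _ hc
    obtain ⟨u, rfl, -⟩ := inl_of i a ha
    obtain ⟨u', rfl, -⟩ := inl_of _ c hc
    exact ⟨id, id⟩
  · rintro - ⟨B, hB⟩
    exact Sum.inl_ne_inr (List.cons.inj hB).1

lemma idem_iff (q : QGamma N) :
    IsIdempotentElem q ↔ (∃ A ts, Lin N A ts ∧ q = El N A ts) ∨ q = Qzero N := by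
  constructor
  · intro h
    by_cases h0 : q = Qzero N
    · exact Or.inr h0
    · exact Or.inl (exists_El_of_idem h h0)
  · rintro (⟨A, ts, h, rfl⟩ | rfl)
    · exact El_idem h
    · exact zero_mul_q _

lemma mem_Eset_iff (q : QGamma N) :
    q ∈ Eset N ↔ (∃ A t ts, Lin N A (t :: ts) ∧ q = El N A (t :: ts)) ∨ q = Qzero N := by
  constructor
  · rintro (⟨α, hα, hn, rfl⟩ | h)
    · obtain ⟨A, ts, h1, h2, h3⟩ := exists_El_of_RLP hα
      rcases ts with _ | ⟨t, ts⟩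
      · exact absurd (h3 rfl) hn
      · exact Or.inl ⟨A, t, ts, h1, h2⟩
    · exact Or.inr h
  · rintro (⟨A, t, ts, h, rfl⟩ | h)
    · obtain ⟨α, hα, h1, h2⟩ := exists_RLP_of_Lin h
      exact Or.inl ⟨α, hα, h2 (by simp), h1⟩
    · exact Or.inr h

end Aux

/-- the idempotents of `Q_Γ` are exactly `{[αα⁻¹] : α ∈ RLP(Γ)} ∪ {[0]}`;
moreover `E = E(Q_Γ) ∖ {[A] : A ∈ T⁰} = {[αα⁻¹] : α ∈ RLP(Γ)∖T⁰} ∪ {[0]}` is a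
subsemilattice of `Q_Γ` (a commutative subsemigroup consisting of idempotents). -/
theorem idempotents_of_QGamma (N : Network V T) :
    (∀ q : QGamma N,
      IsIdempotentElem q ↔ (∃ α ∈ RLP N, q = Qrnf N α α) ∨ q = Qzero N) ∧
    (∀ q : QGamma N, q ∈ Eset N ↔
      (IsIdempotentElem q ∧ ¬ ∃ A : N.T0, q = Qofw (FreeSemigroup.of (Gen.ver A)))) ∧
    (∀ a ∈ Eset N, ∀ b ∈ Eset N, a * b ∈ Eset N ∧ a * b = b * a ∧ IsIdempotentElem a) := by
  refine ⟨fun q => ?_, fun q => ?_, fun a ha b hb => ?_⟩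
  · rw [idem_iff]
    refine or_congr_left ⟨?_, ?_⟩
    · rintro ⟨A, ts, h, rfl⟩
      obtain ⟨α, hα, h1, -⟩ := exists_RLP_of_Lin h
      exact ⟨α, hα, h1⟩
    · rintro ⟨α, hα, rfl⟩
      obtain ⟨A, ts, h1, h2, -⟩ := exists_El_of_RLP hα
      exact ⟨A, ts, h1, h2⟩
  · rw [mem_Eset_iff, idem_iff]
    constructor
    · rintro (⟨A, t, ts, h, rfl⟩ | rfl)
      · exact ⟨Or.inl ⟨A, _, h, rfl⟩, fun ⟨B, hB⟩ => El_cons_ne_vq A B t ts hB⟩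
      · exact ⟨Or.inr rfl, fun ⟨B, hB⟩ => vq_ne_zero B hB.symm⟩
    · rintro ⟨⟨A, ts, h, rfl⟩ | rfl, hn⟩
      · rcases ts with _ | ⟨t, ts⟩
        · exact absurd ⟨A, rfl⟩ hn
        · exact Or.inl ⟨A, t, ts, h, rfl⟩
      · exact Or.inr rfl
  · rw [mem_Eset_iff] at ha hb
    rcases ha with ⟨A, t, ts, h, rfl⟩ | rfl
    · refine and_assoc.1 ⟨?_, El_idem h⟩
      rcases hb with ⟨B, u, us, h', rfl⟩ | rfl
      · by_cases htu : t = u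
        · subst htu
          obtain rfl : A = B := h.1.trans h'.1.symm
          obtain ⟨h1, h2⟩ := El_mul h h'
          refine ⟨(mem_Eset_iff _).2 ?_, h1⟩
          rcases h2 with h2 | h2 | h2
          · exact Or.inl ⟨A, t, ts, h, h2⟩
          · exact Or.inl ⟨A, t, us, h', h2⟩
          · exact Or.inr h2
        · rw [El_cons_mul_ne A B ts us htu, El_cons_mul_ne B A us ts (Ne.symm htu)]
          exact ⟨Or.inr rfl, rfl⟩
      · rw [mul_zero_q, zero_mul_q]
        exact ⟨Or.inr rfl, rfl⟩
    · rw [mul_zero_q, zero_mul_q]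
      exact ⟨Or.inr rfl, rfl, zero_mul_q _⟩

end NetworkSemigroup
end
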